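/- Let q ≥ 3 be an odd integer and λ > 0. Let {f_{n,i} : n, i ∈ ℕ} be a bi-indexed family of symmetric functions in L²(ℝ₊^q) such that for each i there are constants M_i, L_i and q-dimensional squares S_{n,i} ⊂ ℝ₊^q with |f_{n,i}| ≤ M_i almost everywhere for all n, f_{n,i} = 0 almost everywhere outside S_{n,i}, and μ(S_{n,i}) ≤ L_i for all n. Assume ⟨f_{n,i}, f_{n,j}⟩ → λ and ‖f_{n,i} ⋆_{(q+1)/2}^{(q−1)/2} f_{n,j} − f_{n,j}‖ → 0 as n → ∞, for all i, j ∈ ℕ. Then for every k ≥ 1 and all indices j₁, …, j_{k+1} ∈ ℕ, the scalar ((⋯((f_{n,j₁} ⋆_{(q+1)/2}^{(q−1)/2} f_{n,j₂}) ⋆_{(q+1)/2}^{(q−1)/2} f_{n,j₃})⋯) ⋆_{(q+1)/2}^{(q−1)/2} f_{n,j_k}) ⌢_q f_{n,j_{k+1}} converges to λ as n → ∞. -/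

import Mathlib

open MeasureTheory Filter Topology

noncomputable section

/-- The positive orthant `ℝ₊ⁿ` inside `ℝⁿ`. -/
def posOrthant (n : ℕ) : Set (Fin n → ℝ) := {x | ∀ i, 0 ≤ x i}

/-- Lebesgue measure restricted to the positive orthant; the measure underlying `L²(ℝ₊ⁿ)`. -/
def μpos (n : ℕ) : MeasureTheory.Measure (Fin n → ℝ) :=
  MeasureTheory.volume.restrict (posOrthant n)

/-- Total extension of a finite tuple, giving the junk value `0` out of range. -/
def pad {k : ℕ} (t : Fin k → ℝ) (i : ℕ) : ℝ := if h : i < k then t ⟨i, h⟩ else 0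

/-- The `L²` inner product `⟨f, g⟩ = ∫ f ⬝ conj g` over the positive orthant. -/
def L2inner (n : ℕ) (f g : (Fin n → ℝ) → ℂ) : ℂ :=
  ∫ x, f x * (starRingEnd ℂ) (g x) ∂(μpos n)

/-- The `L²` norm over the positive orthant. -/
def L2norm (n : ℕ) (f : (Fin n → ℝ) → ℂ) : ℝ :=
  Real.sqrt (∫ x, ‖f x‖ ^ 2 ∂(μpos n))

/-- The adjoint `f*(t₁,…,tₙ) = conj (f (tₙ,…,t₁))`. -/
def adjF (n : ℕ) (f : (Fin n → ℝ) → ℂ) : (Fin n → ℝ) → ℂ :=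
  fun t => (starRingEnd ℂ) (f fun i => t i.rev)

/-- `f` is symmetric when `f = f*` a.e. on the positive orthant. -/
def IsSymmFn (n : ℕ) (f : (Fin n → ℝ) → ℂ) : Prop :=
  ∀ᵐ t ∂(μpos n), f t = adjF n f t

/-- Reindexing a multivariate function along an equality of dimensions. -/
def reindex {a b : ℕ} (h : a = b) (F : (Fin a → ℝ) → ℂ) : (Fin b → ℝ) → ℂ :=
  fun t => F fun j => t (Fin.cast h j)

/-- The integrand (in the `s`-variables) of the `p`-th arc contraction
`(f ⌢_p g)(t₁,…,t_{m+n-2p}) = ∫ f(t₁,…,t_{m-p},s_p,…,s₁) g(s₁,…,s_p,t_{m-p+1},…,t_{m+n-2p}) ds`. -/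
def arcKer (m n p : ℕ) (f : (Fin m → ℝ) → ℂ) (g : (Fin n → ℝ) → ℂ)
    (t : Fin (m + n - 2 * p) → ℝ) (s : Fin p → ℝ) : ℂ :=
  f (fun j => if (j : ℕ) < m - p then pad t j else pad s (m - 1 - (j : ℕ))) *
  g (fun j => if (j : ℕ) < p then pad s j else pad t (m + (j : ℕ) - 2 * p))

/-- The `p`-th arc contraction `f ⌢_p g`. -/
def arc (m n p : ℕ) (f : (Fin m → ℝ) → ℂ) (g : (Fin n → ℝ) → ℂ) :
    (Fin (m + n - 2 * p) → ℝ) → ℂ :=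
  fun t => ∫ s in posOrthant p, arcKer m n p f g t s

/-- The integrand of the star contraction of index `(p, p-1)`:
`(f ⋆_p^{p-1} g)(t₁,…,t_{m+n-2p+1})
  = ∫ f(t₁,…,t_{m-p},t_{m-p+1},s_{p-1},…,s₁) g(s₁,…,s_{p-1},t_{m-p+1},…,t_{m+n-2p+1}) ds`. -/
def starKer (m n p : ℕ) (f : (Fin m → ℝ) → ℂ) (g : (Fin n → ℝ) → ℂ)
    (t : Fin (m + n + 1 - 2 * p) → ℝ) (s : Fin (p - 1) → ℝ) : ℂ :=
  f (fun j => if (j : ℕ) < m - p + 1 then pad t j else pad s (m - 1 - (j : ℕ))) *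
  g (fun j => if (j : ℕ) < p - 1 then pad s j else pad t (m + (j : ℕ) + 1 - 2 * p))

/-- The star contraction `f ⋆_p^{p-1} g` of index `(p, p-1)`. -/
def starC (m n p : ℕ) (f : (Fin m → ℝ) → ℂ) (g : (Fin n → ℝ) → ℂ) :
    (Fin (m + n + 1 - 2 * p) → ℝ) → ℂ :=
  fun t => ∫ s in posOrthant (p - 1), starKer m n p f g t s

/-- The `q/2`-th arc contraction of two functions of `q` (even) variables,
expressed again as a function of `q` variables. -/
def contrHalf (q : ℕ) (f g : (Fin q → ℝ) → ℂ) : (Fin q → ℝ) → ℂ :=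
  fun t => ∫ s in posOrthant (q / 2),
    (f fun j => if (j : ℕ) < q - q / 2 then pad t j else pad s (q - 1 - (j : ℕ))) *
    (g fun j => if (j : ℕ) < q / 2 then pad s j else pad t (q + (j : ℕ) - 2 * (q / 2)))

/-- The full contraction `f ⌢_q g = ∫ f(t₁,…,t_q) g(t_q,…,t₁) dt` of two
functions of `q` variables. -/
def fullContr (q : ℕ) (f g : (Fin q → ℝ) → ℂ) : ℂ :=
  ∫ t in posOrthant q, f t * g fun i => t i.rev

/-- A `q`-dimensional square (cube): a product of `q` intervals of equal length. -/
def IsCube (q : ℕ) (S : Set (Fin q → ℝ)) : Prop :=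
  ∃ (a : Fin q → ℝ) (c : ℝ), S = Set.univ.pi fun i => Set.Icc (a i) (a i + c)

/-- One step of the left-bracketed iterated contraction, keeping track of the dimension. -/
def iterStep (q : ℕ) (acc : (d : ℕ) × ((Fin d → ℝ) → ℂ))
    (pr : ℕ × ((Fin q → ℝ) → ℂ)) : (d : ℕ) × ((Fin d → ℝ) → ℂ) :=
  ⟨acc.1 + q - 2 * pr.1, arc acc.1 q pr.1 acc.2 pr.2⟩

/-- The left-bracketed iterated contraction `(⋯((f₀ ⌢_{r₁} f₁) ⌢_{r₂} f₂)⋯) ⌢_{r_k} f_k`. -/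
def iterArc (q : ℕ) (f0 : (Fin q → ℝ) → ℂ) (l : List (ℕ × ((Fin q → ℝ) → ℂ))) :
    (d : ℕ) × ((Fin d → ℝ) → ℂ) :=
  l.foldl (iterStep q) ⟨q, f0⟩

/-- The value of a (`0`-dimensional, i.e. scalar) iterated contraction. -/
def scalarOf (x : (d : ℕ) × ((Fin d → ℝ) → ℂ)) : ℂ := x.2 fun _ => 0

/-!
Write `q = 2r + 1` and single out the middle coordinate `u`, which the two factors of the star
contraction share. For fixed `u`, a function of `q` variables is a kernel on `ℝ₊^r × ℝ₊^r` and the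
star contraction is composition of kernels, so `‖F ⋆ G‖ ≤ C ‖F‖` as soon as almost every fibre of
`G` has Hilbert–Schmidt norm at most `C`. For `G` bounded by `M` and supported in a cube of side
`c`, this norm is at most `M c^r`, which is controlled by `M` and the volume `c^(2r+1)`. Hence, in
`F ⋆ f_j - f_j = (F - f_i) ⋆ f_j + (f_i ⋆ f_j - f_j)`, both terms tend to `0` whenever `F - f_i`
does, and by induction the iterated contraction is asymptotic in `L²` to its last factor. The limit
of the scalars is then that of the inner products, by Cauchy–Schwarz.
-/

open scoped ENNReal NNReal

section HilbertSchmidt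

variable {X S Y : Type*} [MeasurableSpace X] [MeasurableSpace S] [MeasurableSpace Y]
  {μ : Measure X} {σ : Measure S} {ν : Measure Y}

lemma eLpNorm_two_sq_eq_lintegral {ε : Type*} [TopologicalSpace ε] [ContinuousENorm ε]
    (f : X → ε) : eLpNorm f 2 μ ^ 2 = ∫⁻ x, ‖f x‖ₑ ^ 2 ∂μ := by
  simpa using eLpNorm_nnreal_pow_eq_lintegral (μ := μ) (f := f) (p := 2) two_ne_zero

lemma sq_lintegral_mul_le {f g : X → ℝ≥0∞} (hf : AEMeasurable f μ) (hg : AEMeasurable g μ) :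
    (∫⁻ x, f x * g x ∂μ) ^ 2 ≤ (∫⁻ x, f x ^ 2 ∂μ) * ∫⁻ x, g x ^ 2 ∂μ := by
  have hölder := pow_le_pow_left' (ENNReal.lintegral_mul_le_Lp_mul_Lq μ .two_two hf hg) 2
  simpa [mul_pow, ← ENNReal.rpow_mul_natCast] using hölder

lemma lintegral_sq_lintegral_mul_le [SFinite σ] [SFinite ν]
    {h : X × S → ℝ≥0∞} {g : S × Y → ℝ≥0∞}
    (hh : AEMeasurable h (μ.prod σ)) (hg : AEMeasurable g (σ.prod ν)) :
    ∫⁻ z, (∫⁻ s, h (z.1, s) * g (s, z.2) ∂σ) ^ 2 ∂(μ.prod ν) ≤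
      (∫⁻ p, h p ^ 2 ∂(μ.prod σ)) * ∫⁻ p, g p ^ 2 ∂(σ.prod ν) := by
  have hh_slice : ∀ᵐ x ∂μ, AEMeasurable (fun s => h (x, s)) σ :=
    hh.aestronglyMeasurable.prodMk_left.mono fun _ hx => hx.aemeasurable
  have hg_slice : ∀ᵐ y ∂ν, AEMeasurable (fun s => g (s, y)) σ :=
    hg.aestronglyMeasurable.prodMk_right.mono fun _ hy => hy.aemeasurable
  calc ∫⁻ z, (∫⁻ s, h (z.1, s) * g (s, z.2) ∂σ) ^ 2 ∂(μ.prod ν)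
      ≤ ∫⁻ z, (∫⁻ s, h (z.1, s) ^ 2 ∂σ) * (∫⁻ s, g (s, z.2) ^ 2 ∂σ) ∂(μ.prod ν) := by
        apply lintegral_mono_ae
        filter_upwards [Measure.quasiMeasurePreserving_fst.ae hh_slice,
          Measure.quasiMeasurePreserving_snd.ae hg_slice] with z hx hy
        exact sq_lintegral_mul_le hx hy
    _ = (∫⁻ x, ∫⁻ s, h (x, s) ^ 2 ∂σ ∂μ) * ∫⁻ y, ∫⁻ s, g (s, y) ^ 2 ∂σ ∂ν :=
        lintegral_prod_mul (hh.pow_const 2).lintegral_prod_right'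
          (hg.pow_const 2).prod_swap.lintegral_prod_right'
    _ = _ := by
        rw [lintegral_prod _ (hh.pow_const 2), lintegral_prod_symm _ (hg.pow_const 2)]

/- On almost every fibre this is submultiplicativity of the Hilbert–Schmidt norm. -/
lemma eLpNorm_lintegral_enorm_mul_le {Ω ε ε' : Type*} [MeasurableSpace Ω] {ρ : Measure Ω}
    [TopologicalSpace ε] [ContinuousENorm ε] [TopologicalSpace ε'] [ContinuousENorm ε']
    [SFinite μ] [SFinite σ] [SFinite ν] {H : Ω × X × S → ε} {G : Ω × S × Y → ε'} {C : ℝ≥0}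
    (hH : AEStronglyMeasurable H (ρ.prod (μ.prod σ)))
    (hG : AEStronglyMeasurable G (ρ.prod (σ.prod ν)))
    (hGC : ∀ᵐ ω ∂ρ, eLpNorm (fun p => G (ω, p)) 2 (σ.prod ν) ≤ C) :
    eLpNorm (fun z : Ω × X × Y => ∫⁻ s, ‖H (z.1, z.2.1, s)‖ₑ * ‖G (z.1, s, z.2.2)‖ₑ ∂σ) 2
      (ρ.prod (μ.prod ν)) ≤ C * eLpNorm H 2 (ρ.prod (μ.prod σ)) := by
  rw [← ENNReal.pow_le_pow_left_iff two_ne_zero, mul_pow, eLpNorm_two_sq_eq_lintegral,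
    eLpNorm_two_sq_eq_lintegral]
  simp only [enorm_eq_self]
  calc ∫⁻ z, (∫⁻ s, ‖H (z.1, z.2.1, s)‖ₑ * ‖G (z.1, s, z.2.2)‖ₑ ∂σ) ^ 2 ∂(ρ.prod (μ.prod ν))
      ≤ ∫⁻ ω, ∫⁻ z, (∫⁻ s, ‖H (ω, z.1, s)‖ₑ * ‖G (ω, s, z.2)‖ₑ ∂σ) ^ 2 ∂(μ.prod ν) ∂ρ :=
        lintegral_prod_le _
    _ ≤ ∫⁻ ω, (C : ℝ≥0∞) ^ 2 * ∫⁻ p, ‖H (ω, p)‖ₑ ^ 2 ∂(μ.prod σ) ∂ρ := by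
        apply lintegral_mono_ae
        filter_upwards [hH.prodMk_left, hG.prodMk_left, hGC] with ω hHω hGω hCω
        refine (lintegral_sq_lintegral_mul_le hHω.enorm hGω.enorm).trans ?_
        rw [mul_comm, ← eLpNorm_two_sq_eq_lintegral (fun p => G (ω, p))]
        gcongr
    _ = (C : ℝ≥0∞) ^ 2 * ∫⁻ p, ‖H p‖ₑ ^ 2 ∂(ρ.prod (μ.prod σ)) := by
        rw [lintegral_const_mul' _ _ (by finiteness), lintegral_prod _ (hH.enorm.pow_const 2)]

end HilbertSchmidt

section FiberComp

variable {Ω X S Y E : Type*} [MeasurableSpace Ω] [MeasurableSpace X] [MeasurableSpace S]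
  [MeasurableSpace Y] [NormedRing E]
  {ρ : Measure Ω} {μ : Measure X} {σ : Measure S} {ν : Measure Y}
  [SFinite μ] [SFinite σ] [SFinite ν]

lemma quasiMeasurePreserving_fiberComp_left [SFinite ρ] :
    Measure.QuasiMeasurePreserving (fun w : (Ω × X × Y) × S => (w.1.1, w.1.2.1, w.2))
      ((ρ.prod (μ.prod ν)).prod σ) (ρ.prod (μ.prod σ)) :=
  have drop_y : Measure.QuasiMeasurePreserving (fun z : Ω × X × Y => (z.1, z.2.1))
      (ρ.prod (μ.prod ν)) (ρ.prod μ) :=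
    QuasiMeasurePreserving.prodMap (.id ρ) Measure.quasiMeasurePreserving_fst
  (measurePreserving_prodAssoc ρ μ σ).quasiMeasurePreserving.comp
    (QuasiMeasurePreserving.prodMap drop_y (.id σ))

lemma quasiMeasurePreserving_fiberComp_right [SFinite ρ] :
    Measure.QuasiMeasurePreserving (fun w : (Ω × X × Y) × S => (w.1.1, w.2, w.1.2.2))
      ((ρ.prod (μ.prod ν)).prod σ) (ρ.prod (σ.prod ν)) :=
  have drop_x : Measure.QuasiMeasurePreserving (fun z : Ω × X × Y => (z.1, z.2.2))
      (ρ.prod (μ.prod ν)) (ρ.prod ν) :=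
    QuasiMeasurePreserving.prodMap (.id ρ) Measure.quasiMeasurePreserving_snd
  have swap_ys : Measure.QuasiMeasurePreserving (fun z : Ω × Y × S => (z.1, z.2.2, z.2.1))
      (ρ.prod (ν.prod σ)) (ρ.prod (σ.prod ν)) :=
    QuasiMeasurePreserving.prodMap (.id ρ) Measure.measurePreserving_swap.quasiMeasurePreserving
  (swap_ys.comp (measurePreserving_prodAssoc ρ ν σ).quasiMeasurePreserving).comp
    (QuasiMeasurePreserving.prodMap drop_x (.id σ))

variable {H H₁ H₂ : Ω × X × S → E} {G : Ω × S × Y → E} {C : ℝ≥0}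

lemma aestronglyMeasurable_fiberComp_integrand [SFinite ρ]
    (hH : AEStronglyMeasurable H (ρ.prod (μ.prod σ)))
    (hG : AEStronglyMeasurable G (ρ.prod (σ.prod ν))) :
    AEStronglyMeasurable
      (fun w : (Ω × X × Y) × S => H (w.1.1, w.1.2.1, w.2) * G (w.1.1, w.2, w.1.2.2))
      ((ρ.prod (μ.prod ν)).prod σ) :=
  (hH.comp_quasiMeasurePreserving quasiMeasurePreserving_fiberComp_left).mul
    (hG.comp_quasiMeasurePreserving quasiMeasurePreserving_fiberComp_right)

lemma enorm_mul_le_mul_enorm (a b : E) : ‖a * b‖ₑ ≤ ‖a‖ₑ * ‖b‖ₑ := by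
  simpa only [enorm, ← ENNReal.coe_mul, ENNReal.coe_le_coe] using nnnorm_mul_le a b

lemma ae_integrable_fiberComp_integrand [SFinite ρ] (hH : MemLp H 2 (ρ.prod (μ.prod σ)))
    (hG : AEStronglyMeasurable G (ρ.prod (σ.prod ν)))
    (hGC : ∀ᵐ ω ∂ρ, eLpNorm (fun p => G (ω, p)) 2 (σ.prod ν) ≤ C) :
    ∀ᵐ z ∂(ρ.prod (μ.prod ν)),
      Integrable (fun s => H (z.1, z.2.1, s) * G (z.1, s, z.2.2)) σ := by
  have majorant_meas : AEMeasurable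
      (fun z : Ω × X × Y => ∫⁻ s, ‖H (z.1, z.2.1, s)‖ₑ * ‖G (z.1, s, z.2.2)‖ₑ ∂σ)
      (ρ.prod (μ.prod ν)) :=
    ((hH.1.comp_quasiMeasurePreserving quasiMeasurePreserving_fiberComp_left).enorm.mul
      (hG.comp_quasiMeasurePreserving
        quasiMeasurePreserving_fiberComp_right).enorm).lintegral_prod_right'
  have majorant_ne_top : eLpNorm
      (fun z : Ω × X × Y => ∫⁻ s, ‖H (z.1, z.2.1, s)‖ₑ * ‖G (z.1, s, z.2.2)‖ₑ ∂σ) 2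
      (ρ.prod (μ.prod ν)) ^ 2 ≠ ⊤ :=
    ENNReal.pow_ne_top <| ne_top_of_le_ne_top (ENNReal.mul_ne_top ENNReal.coe_ne_top hH.2.ne)
      (eLpNorm_lintegral_enorm_mul_le hH.1 hG hGC)
  rw [eLpNorm_two_sq_eq_lintegral] at majorant_ne_top
  filter_upwards [ae_lt_top' (majorant_meas.pow_const 2) majorant_ne_top,
    (aestronglyMeasurable_fiberComp_integrand hH.1 hG).prodMk_left] with z hz hz_meas
  refine ⟨hz_meas, (lintegral_mono fun s => enorm_mul_le_mul_enorm _ _).trans_lt ?_⟩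
  simpa [ENNReal.pow_lt_top_iff] using hz

variable [NormedSpace ℝ E]

/-- The composition of two kernels depending on a common parameter `ω`:
`(ω, x, y) ↦ ∫ H(ω, x, s) G(ω, s, y) ds`. -/
def fiberComp (σ : Measure S) (H : Ω × X × S → E) (G : Ω × S × Y → E) (z : Ω × X × Y) : E :=
  ∫ s, H (z.1, z.2.1, s) * G (z.1, s, z.2.2) ∂σ

lemma eLpNorm_fiberComp_le (hH : AEStronglyMeasurable H (ρ.prod (μ.prod σ)))
    (hG : AEStronglyMeasurable G (ρ.prod (σ.prod ν)))
    (hGC : ∀ᵐ ω ∂ρ, eLpNorm (fun p => G (ω, p)) 2 (σ.prod ν) ≤ C) :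
    eLpNorm (fiberComp σ H G) 2 (ρ.prod (μ.prod ν)) ≤ C * eLpNorm H 2 (ρ.prod (μ.prod σ)) := by
  refine (eLpNorm_mono_enorm fun z => ?_).trans (eLpNorm_lintegral_enorm_mul_le hH hG hGC)
  rw [enorm_eq_self]
  exact (enorm_integral_le_lintegral_enorm _).trans
    (lintegral_mono fun s => enorm_mul_le_mul_enorm _ _)

lemma memLp_fiberComp [SFinite ρ] (hH : MemLp H 2 (ρ.prod (μ.prod σ)))
    (hG : AEStronglyMeasurable G (ρ.prod (σ.prod ν)))
    (hGC : ∀ᵐ ω ∂ρ, eLpNorm (fun p => G (ω, p)) 2 (σ.prod ν) ≤ C) :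
    MemLp (fiberComp σ H G) 2 (ρ.prod (μ.prod ν)) :=
  ⟨(aestronglyMeasurable_fiberComp_integrand hH.1 hG).integral_prod_right',
    (eLpNorm_fiberComp_le hH.1 hG hGC).trans_lt (ENNReal.mul_lt_top ENNReal.coe_lt_top hH.2)⟩

lemma fiberComp_sub_ae [SFinite ρ] (hH₁ : MemLp H₁ 2 (ρ.prod (μ.prod σ)))
    (hH₂ : MemLp H₂ 2 (ρ.prod (μ.prod σ)))
    (hG : AEStronglyMeasurable G (ρ.prod (σ.prod ν)))
    (hGC : ∀ᵐ ω ∂ρ, eLpNorm (fun p => G (ω, p)) 2 (σ.prod ν) ≤ C) :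
    fiberComp σ (H₁ - H₂) G =ᵐ[ρ.prod (μ.prod ν)] fiberComp σ H₁ G - fiberComp σ H₂ G := by
  filter_upwards [ae_integrable_fiberComp_integrand hH₁ hG hGC,
    ae_integrable_fiberComp_integrand hH₂ hG hGC] with z h₁ h₂
  simpa only [fiberComp, Pi.sub_apply, sub_mul] using integral_sub h₁ h₂

end FiberComp

section Coordinates

/-- Lebesgue measure on the half line `ℝ₊`, the one-dimensional factor of `μpos n`. -/
abbrev halfLine : Measure ℝ := volume.restrict (Set.Ici 0)

lemma posOrthant_eq_pi (n : ℕ) : posOrthant n = Set.univ.pi fun _ => Set.Ici 0 := by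
  ext x
  simp [posOrthant, Set.mem_pi, -Set.pi_univ_Ici]

lemma μpos_eq_pi (n : ℕ) : μpos n = Measure.pi fun _ => halfLine := by
  rw [μpos, posOrthant_eq_pi, volume_pi, Measure.restrict_pi_pi]

instance (n : ℕ) : SigmaFinite (μpos n) := by
  rw [μpos_eq_pi]
  infer_instance

lemma μpos_pi (n : ℕ) (s : Fin n → Set ℝ) : μpos n (Set.univ.pi s) = ∏ i, halfLine (s i) := by
  rw [μpos_eq_pi, Measure.pi_pi]

lemma measurePreserving_μpos_of_pi {n : ℕ} {Z : Type*} [MeasurableSpace Z] {ν : Measure Z}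
    {φ : Z → Fin n → ℝ} (hφ : Measurable φ)
    (h_box : ∀ s : Fin n → Set ℝ, ν (φ ⁻¹' Set.univ.pi s) = ∏ i, halfLine (s i)) :
    MeasurePreserving φ ν (μpos n) := by
  refine ⟨hφ, ?_⟩
  rw [μpos_eq_pi, Measure.pi_eq]
  intro s hs
  rw [Measure.map_apply hφ (.univ_pi hs), h_box]

/-- The reversal `(t₁, …, tₙ) ↦ (tₙ, …, t₁)` of a tuple. -/
def revTuple (n : ℕ) (t : Fin n → ℝ) : Fin n → ℝ := fun i => t i.rev

lemma measurePreserving_revTuple (n : ℕ) : MeasurePreserving (revTuple n) (μpos n) (μpos n) := by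
  refine measurePreserving_μpos_of_pi (by unfold revTuple; fun_prop) fun s => ?_
  have preimage_box : revTuple n ⁻¹' Set.univ.pi s = Set.univ.pi fun i => s i.rev := by
    ext t
    simpa [revTuple, Set.mem_pi] using
      Fin.revPerm.forall_congr_left (p := fun i => t i.rev ∈ s i)
  rw [preimage_box, μpos_pi]
  exact Equiv.prod_comp Fin.revPerm fun i => halfLine (s i)

/-- The tuple `(x₁, …, x_a, u, y₁, …, y_b)` assembled from `(u, x, y)`; it singles out the
coordinate shared by the two factors of a star contraction. -/
def midAppend (a b : ℕ) : (ℝ × (Fin a → ℝ) × (Fin b → ℝ)) ≃ᵐ (Fin (a + 1 + b) → ℝ) where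
  toFun z := Fin.append (Fin.snoc z.2.1 z.1) z.2.2
  invFun t := (t (Fin.castAdd b (Fin.last a)), fun i => t (Fin.castAdd b i.castSucc),
    fun i => t (Fin.natAdd (a + 1) i))
  left_inv z := by simp
  right_inv t := by
    funext j
    refine Fin.addCases (fun i => ?_) (fun i => ?_) j
    · refine Fin.lastCases ?_ (fun i => ?_) i <;> simp
    · simp
  measurable_toFun := by
    refine measurable_pi_iff.2 fun j => Fin.addCases (fun i => ?_) (fun i => ?_) j
    · refine Fin.lastCases ?_ (fun i => ?_) i <;>
        simp only [Equiv.coe_fn_mk, Fin.append_left, Fin.snoc_last, Fin.snoc_castSucc] <;> fun_prop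
    · simp only [Equiv.coe_fn_mk, Fin.append_right]
      fun_prop
  measurable_invFun := by
    dsimp only [Equiv.coe_fn_symm_mk]
    fun_prop

lemma preimage_midAppend_pi (a b : ℕ) (s : Fin (a + 1 + b) → Set ℝ) :
    midAppend a b ⁻¹' Set.univ.pi s = s (Fin.castAdd b (Fin.last a)) ×ˢ
      (Set.univ.pi fun i : Fin a => s (Fin.castAdd b i.castSucc)) ×ˢ
      (Set.univ.pi fun i : Fin b => s (Fin.natAdd (a + 1) i)) := by
  ext z
  simp [midAppend, Set.mem_pi, Fin.forall_fin_add, Fin.forall_fin_succ', and_assoc, and_comm]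

lemma measurePreserving_midAppend (a b : ℕ) :
    MeasurePreserving (midAppend a b) (halfLine.prod ((μpos a).prod (μpos b)))
      (μpos (a + 1 + b)) := by
  refine measurePreserving_μpos_of_pi (midAppend a b).measurable fun s => ?_
  rw [preimage_midAppend_pi, Measure.prod_prod, Measure.prod_prod, μpos_pi, μpos_pi,
    Fin.prod_univ_add, Fin.prod_univ_castSucc, mul_left_comm, mul_assoc]

/-- The star contraction of index `(s+1, s)` of functions of `a+1+s` and `s+1+b` variables, as a
function of `a+1+b` variables. -/
def starContr (a b s : ℕ) (F : (Fin (a + 1 + s) → ℝ) → ℂ) (G : (Fin (s + 1 + b) → ℝ) → ℂ) :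
    (Fin (a + 1 + b) → ℝ) → ℂ :=
  reindex (by omega) (starC (a + 1 + s) (s + 1 + b) (s + 1) F G)

lemma reindex_starC_eq_starContr {a b s p : ℕ} (hp : p = s + 1)
    (h : a + 1 + s + (s + 1 + b) + 1 - 2 * p = a + 1 + b)
    (F : (Fin (a + 1 + s) → ℝ) → ℂ) (G : (Fin (s + 1 + b) → ℝ) → ℂ) :
    reindex h (starC (a + 1 + s) (s + 1 + b) p F G) = starContr a b s F G := by
  subst hp
  rfl

lemma pad_of_lt {k : ℕ} (t : Fin k → ℝ) {i : ℕ} (h : i < k) : pad t i = t ⟨i, h⟩ :=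
  dif_pos h

lemma pad_val {k : ℕ} (t : Fin k → ℝ) (i : Fin k) : pad t i = t i :=
  pad_of_lt t i.isLt

lemma pad_comp_cast {k l : ℕ} (h : k = l) (t : Fin l → ℝ) (i : ℕ) :
    pad (fun j : Fin k => t (Fin.cast h j)) i = pad t i := by
  subst h
  rfl

lemma pad_revTuple {k i : ℕ} (t : Fin k → ℝ) (h : i < k) :
    pad (revTuple k t) i = pad t (k - 1 - i) := by
  rw [pad_of_lt _ h, pad_of_lt _ (by omega)]
  exact congrArg t (Fin.ext (by simp; omega))

lemma pad_midAppend (a b : ℕ) (z : ℝ × (Fin a → ℝ) × (Fin b → ℝ)) (i : ℕ) :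
    pad (midAppend a b z) i =
      if i < a then pad z.2.1 i else if i = a then z.1 else pad z.2.2 (i - (a + 1)) := by
  by_cases hi : i < a + 1 + b
  · lift i to Fin (a + 1 + b) using hi
    rw [pad_val]
    refine Fin.addCases (fun i => ?_) (fun i => ?_) i
    · refine Fin.lastCases ?_ (fun i => ?_) i <;> simp [midAppend, pad_val]
    · simp [midAppend, pad_val, show ¬ a + 1 + (i : ℕ) < a by omega,
        show a + 1 + (i : ℕ) ≠ a by omega]
  · simp [pad, hi, show ¬ i < a by omega, show i ≠ a by omega,
      show ¬ i - (a + 1) < b by omega]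

/- The last argument block of `F` is fed in reversed order, as in the definition of `starC`. -/
lemma starContr_comp_midAppend (a b s : ℕ) (F : (Fin (a + 1 + s) → ℝ) → ℂ)
    (G : (Fin (s + 1 + b) → ℝ) → ℂ) :
    starContr a b s F G ∘ midAppend a b =
      fiberComp (μpos s) (F ∘ midAppend a s ∘ Prod.map id (Prod.map id (revTuple s)))
        (G ∘ midAppend s b) := by
  funext z
  refine integral_congr_ae (.of_forall fun x => ?_)
  refine congrArg₂ (fun u v => F u * G v) (funext fun j => ?_) (funext fun j => ?_)
  · have hj := j.isLt
    change _ = midAppend a s (z.1, z.2.1, revTuple s x) j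
    rw [pad_comp_cast, ← pad_val (midAppend _ _ _) j, pad_midAppend, pad_midAppend]
    split_ifs <;> try first | rfl | omega
    rw [pad_revTuple _ (by omega)]
    congr 1
    omega
  · rw [pad_comp_cast, ← pad_val (midAppend _ _ _) j, pad_midAppend, pad_midAppend]
    split_ifs <;> try first | rfl | omega
    congr 1
    omega

end Coordinates

section SliceBound

variable {a b s : ℕ} {F F₁ F₂ : (Fin (a + 1 + s) → ℝ) → ℂ} {G : (Fin (s + 1 + b) → ℝ) → ℂ}
  {C : ℝ≥0}

/-- The kernels `(x, y) ↦ G(x, u, y)`, with `x` of length `s` and `y` of length `b`, have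
`L²`-norm at most `C` for almost every `u`. -/
def SliceL2Bound (s b : ℕ) (G : (Fin (s + 1 + b) → ℝ) → ℂ) (C : ℝ≥0) : Prop :=
  ∀ᵐ u ∂halfLine, eLpNorm (fun p => G (midAppend s b (u, p))) 2 ((μpos s).prod (μpos b)) ≤ C

lemma measurePreserving_midAppend_revTuple (a s : ℕ) :
    MeasurePreserving (midAppend a s ∘ Prod.map id (Prod.map id (revTuple s)))
      (halfLine.prod ((μpos a).prod (μpos s))) (μpos (a + 1 + s)) :=
  (measurePreserving_midAppend a s).comp
    ((MeasurePreserving.id _).prod ((MeasurePreserving.id _).prod (measurePreserving_revTuple s)))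

lemma memLp_starContr (hF : MemLp F 2 (μpos (a + 1 + s)))
    (hG : AEStronglyMeasurable G (μpos (s + 1 + b))) (hC : SliceL2Bound s b G C) :
    MemLp (starContr a b s F G) 2 (μpos (a + 1 + b)) := by
  rw [← (measurePreserving_midAppend a b).map_eq, MeasurableEquiv.memLp_map_measure_iff,
    starContr_comp_midAppend]
  exact memLp_fiberComp (hF.comp_measurePreserving (measurePreserving_midAppend_revTuple a s))
    (hG.comp_measurePreserving (measurePreserving_midAppend s b)) hC

lemma eLpNorm_starContr_le (hF : MemLp F 2 (μpos (a + 1 + s)))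
    (hG : AEStronglyMeasurable G (μpos (s + 1 + b))) (hC : SliceL2Bound s b G C) :
    eLpNorm (starContr a b s F G) 2 (μpos (a + 1 + b)) ≤ C * eLpNorm F 2 (μpos (a + 1 + s)) := by
  have hF_comp := measurePreserving_midAppend_revTuple a s
  rw [← eLpNorm_comp_measurePreserving (memLp_starContr hF hG hC).1
    (measurePreserving_midAppend a b), starContr_comp_midAppend,
    ← eLpNorm_comp_measurePreserving hF.1 hF_comp]
  exact eLpNorm_fiberComp_le (hF.1.comp_measurePreserving hF_comp)
    (hG.comp_measurePreserving (measurePreserving_midAppend s b)) hC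

lemma starContr_sub_ae (hF₁ : MemLp F₁ 2 (μpos (a + 1 + s))) (hF₂ : MemLp F₂ 2 (μpos (a + 1 + s)))
    (hG : AEStronglyMeasurable G (μpos (s + 1 + b))) (hC : SliceL2Bound s b G C) :
    starContr a b s (F₁ - F₂) G =ᵐ[μpos (a + 1 + b)]
      starContr a b s F₁ G - starContr a b s F₂ G := by
  have hF_comp := measurePreserving_midAppend_revTuple a s
  have h_comp : starContr a b s (F₁ - F₂) G ∘ midAppend a b
      =ᵐ[halfLine.prod ((μpos a).prod (μpos b))]
      (starContr a b s F₁ G - starContr a b s F₂ G) ∘ midAppend a b := by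
    simpa only [Pi.sub_comp, starContr_comp_midAppend] using
      fiberComp_sub_ae (hF₁.comp_measurePreserving hF_comp) (hF₂.comp_measurePreserving hF_comp)
        (hG.comp_measurePreserving (measurePreserving_midAppend s b)) hC
  filter_upwards [((measurePreserving_midAppend a b).symm _).quasiMeasurePreserving.ae h_comp]
    with t ht
  simpa only [Function.comp_apply, MeasurableEquiv.apply_symm_apply] using ht

end SliceBound

section Cube

lemma eLpNorm_le_of_ae_bound_of_support {X E : Type*} [MeasurableSpace X] [NormedAddCommGroup E]
    {μ : Measure X} {f : X → E} {T : Set X} {M : ℝ} {p : ℝ≥0∞} (hp : p ≠ 0) (hp_top : p ≠ ⊤)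
    (hT : MeasurableSet T) (hM : ∀ᵐ x ∂μ, ‖f x‖ ≤ M) (h_supp : ∀ᵐ x ∂μ, x ∉ T → f x = 0) :
    eLpNorm f p μ ≤ ‖M‖ₑ * μ T ^ (1 / p.toReal) := by
  rw [← eLpNorm_indicator_const hT hp hp_top]
  apply eLpNorm_mono_ae
  filter_upwards [hM, h_supp] with x hx_le hx_zero
  by_cases hxT : x ∈ T
  · simpa [hxT] using hx_le.trans (le_abs_self M)
  · simp [hxT, hx_zero hxT]

lemma volume_cube (n : ℕ) (x : Fin n → ℝ) (c : ℝ) :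
    volume (Set.univ.pi fun i => Set.Icc (x i) (x i + c)) = ENNReal.ofReal c ^ n := by
  simp only [volume_pi_pi, Real.volume_Icc, add_sub_cancel_left, Finset.prod_const,
    Finset.card_univ, Fintype.card_fin]

lemma μpos_cube_le (n : ℕ) (x : Fin n → ℝ) (c : ℝ) :
    μpos n (Set.univ.pi fun i => Set.Icc (x i) (x i + c)) ≤ ENNReal.ofReal c ^ n :=
  (Measure.restrict_apply_le _ _).trans_eq (volume_cube n x c)

lemma pow_le_max_one_pow {R : Type*} [MonoidWithZero R] [LinearOrder R] [ZeroLEOneClass R]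
    [PosMulMono R] {c : R} (hc₀ : 0 ≤ c) {m n : ℕ} (hmn : m ≤ n) : c ^ m ≤ max 1 (c ^ n) := by
  rcases le_total c 1 with hc | hc
  · exact le_max_of_le_left (pow_le_one₀ hc₀ hc)
  · exact le_max_of_le_right (pow_le_pow_right₀ hc hmn)

/- The slices of a cube of side `c` have measure at most `c ^ (2 * r)`, so the square root of that
measure is controlled by the volume `c ^ (2 * r + 1)` of the cube. -/
lemma sliceL2Bound_of_isCube {r : ℕ} {G : (Fin (r + 1 + r) → ℝ) → ℂ} {M L : ℝ}
    {S : Set (Fin (r + 1 + r) → ℝ)} (hS : IsCube (r + 1 + r) S)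
    (hM : ∀ᵐ t ∂μpos (r + 1 + r), ‖G t‖ ≤ M) (h_supp : ∀ᵐ t ∂μpos (r + 1 + r), t ∉ S → G t = 0)
    (hL : (volume S).toReal ≤ L) :
    SliceL2Bound r r G (‖M‖₊ * max 1 L.toNNReal) := by
  obtain ⟨x, c, rfl⟩ := hS
  have hcL : ENNReal.ofReal c ^ (r + 1 + r) ≤ L.toNNReal := by
    rw [volume_cube] at hL
    exact (ENNReal.le_ofReal_iff_toReal_le (by finiteness) (ENNReal.toReal_nonneg.trans hL)).2 hL
  let box₁ := Set.univ.pi fun i : Fin r =>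
    Set.Icc (x (Fin.castAdd r i.castSucc)) (x (Fin.castAdd r i.castSucc) + c)
  let box₂ := Set.univ.pi fun i : Fin r =>
    Set.Icc (x (Fin.natAdd (r + 1) i)) (x (Fin.natAdd (r + 1) i) + c)
  have h_meas : MeasurableSet (box₁ ×ˢ box₂) :=
    (MeasurableSet.univ_pi fun _ => measurableSet_Icc).prod
      (MeasurableSet.univ_pi fun _ => measurableSet_Icc)
  have h_slices := Measure.ae_ae_of_ae_prod
    ((measurePreserving_midAppend r r).quasiMeasurePreserving.ae (hM.and h_supp))
  filter_upwards [h_slices] with u hu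
  have h_supp_u : ∀ᵐ p ∂(μpos r).prod (μpos r),
      p ∉ box₁ ×ˢ box₂ → G (midAppend r r (u, p)) = 0 := by
    filter_upwards [hu] with p hp hp_box
    refine hp.2 fun hp_cube => hp_box ?_
    rw [← Set.mem_preimage, preimage_midAppend_pi] at hp_cube
    exact hp_cube.2
  calc eLpNorm (fun p => G (midAppend r r (u, p))) 2 ((μpos r).prod (μpos r))
      ≤ ‖M‖ₑ * (μpos r).prod (μpos r) (box₁ ×ˢ box₂) ^ (1 / (2 : ℝ≥0∞).toReal) :=
        eLpNorm_le_of_ae_bound_of_support two_ne_zero ENNReal.ofNat_ne_top h_meas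
          (hu.mono fun _ hp => hp.1) h_supp_u
    _ ≤ ‖M‖ₑ * ((ENNReal.ofReal c ^ r) ^ 2) ^ (1 / (2 : ℝ≥0∞).toReal) := by
        rw [Measure.prod_prod, sq]
        gcongr <;> exact μpos_cube_le _ _ _
    _ = ‖M‖ₑ * ENNReal.ofReal c ^ r := by
        rw [← ENNReal.rpow_natCast_mul]
        norm_num
    _ ≤ ‖M‖ₑ * max 1 (ENNReal.ofReal c ^ (r + 1 + r)) := by
        gcongr
        exact pow_le_max_one_pow zero_le (by omega)
    _ ≤ (‖M‖₊ * max 1 L.toNNReal : ℝ≥0) := by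
        push_cast
        exact mul_le_mul_right (max_le_max le_rfl hcL) _

end Cube

section L2

variable {n : ℕ} {F G H : (Fin n → ℝ) → ℂ}

lemma L2norm_congr_ae (h : F =ᵐ[μpos n] G) : L2norm n F = L2norm n G := by
  rw [L2norm, L2norm, integral_congr_ae (h.mono fun t ht => by rw [ht])]

lemma L2norm_eq_toReal_eLpNorm (hF : AEStronglyMeasurable F (μpos n)) :
    L2norm n F = (eLpNorm F 2 (μpos n)).toReal := by
  rw [L2norm, Real.sqrt_eq_rpow, toReal_eLpNorm hF,
    lpNorm_eq_integral_norm_rpow_toReal two_ne_zero ENNReal.ofNat_ne_top hF]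
  norm_num

lemma L2norm_eq_norm_toLp (hF : MemLp F 2 (μpos n)) : L2norm n F = ‖hF.toLp F‖ := by
  rw [L2norm_eq_toReal_eLpNorm hF.1, Lp.norm_toLp]

lemma L2inner_eq_inner_toLp (hF : MemLp F 2 (μpos n)) (hG : MemLp G 2 (μpos n)) :
    L2inner n F G = inner ℂ (hG.toLp G) (hF.toLp F) := by
  rw [L2.inner_def]
  apply integral_congr_ae
  filter_upwards [hF.coeFn_toLp, hG.coeFn_toLp] with t htF htG
  rw [htF, htG, RCLike.inner_apply]

lemma L2norm_add_le (hF : MemLp F 2 (μpos n)) (hG : MemLp G 2 (μpos n)) :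
    L2norm n (F + G) ≤ L2norm n F + L2norm n G := by
  rw [L2norm_eq_norm_toLp (hF.add hG), L2norm_eq_norm_toLp hF, L2norm_eq_norm_toLp hG,
    MemLp.toLp_add]
  exact norm_add_le _ _

lemma norm_L2inner_le (hF : MemLp F 2 (μpos n)) (hG : MemLp G 2 (μpos n)) :
    ‖L2inner n F G‖ ≤ L2norm n F * L2norm n G := by
  rw [L2inner_eq_inner_toLp hF hG, L2norm_eq_norm_toLp hF, L2norm_eq_norm_toLp hG, mul_comm]
  exact norm_inner_le_norm _ _

lemma L2inner_sub_left (hF : MemLp F 2 (μpos n)) (hG : MemLp G 2 (μpos n))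
    (hH : MemLp H 2 (μpos n)) : L2inner n (F - G) H = L2inner n F H - L2inner n G H := by
  rw [L2inner_eq_inner_toLp (hF.sub hG) hH, L2inner_eq_inner_toLp hF hH,
    L2inner_eq_inner_toLp hG hH, MemLp.toLp_sub, inner_sub_right]

lemma L2norm_eq_sqrt_re_L2inner (F : (Fin n → ℝ) → ℂ) :
    L2norm n F = √(L2inner n F F).re := by
  have h_sq : ∀ t, F t * (starRingEnd ℂ) (F t) = ((‖F t‖ ^ 2 : ℝ) : ℂ) := fun t => by
    rw [RCLike.mul_conj]
    norm_cast
  rw [L2norm, L2inner, integral_congr_ae (.of_forall h_sq), integral_complex_ofReal,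
    Complex.ofReal_re]

lemma fullContr_eq_L2inner (F : (Fin n → ℝ) → ℂ) (hG : IsSymmFn n G) :
    fullContr n F G = L2inner n F G := by
  apply integral_congr_ae
  filter_upwards [hG] with t ht
  rw [ht, adjF, Complex.conj_conj]

lemma tendsto_L2inner_of_tendsto_L2norm_sub {N : Type*} {l : Filter N}
    {u v w : N → (Fin n → ℝ) → ℂ} {a b : ℂ} (hu : ∀ m, MemLp (u m) 2 (μpos n))
    (hv : ∀ m, MemLp (v m) 2 (μpos n)) (hw : ∀ m, MemLp (w m) 2 (μpos n))
    (huv : Tendsto (fun m => L2norm n (u m - v m)) l (𝓝 0))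
    (hvw : Tendsto (fun m => L2inner n (v m) (w m)) l (𝓝 a))
    (hww : Tendsto (fun m => L2inner n (w m) (w m)) l (𝓝 b)) :
    Tendsto (fun m => L2inner n (u m) (w m)) l (𝓝 a) := by
  have hw_norm : Tendsto (fun m => L2norm n (w m)) l (𝓝 √b.re) := by
    simp only [L2norm_eq_sqrt_re_L2inner]
    exact ((Complex.continuous_re.tendsto b).comp hww).sqrt
  have h_diff : Tendsto (fun m => L2inner n (u m - v m) (w m)) l (𝓝 0) := by
    refine squeeze_zero_norm (fun m => norm_L2inner_le ((hu m).sub (hv m)) (hw m)) ?_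
    simpa only [zero_mul] using huv.mul hw_norm
  simpa only [L2inner_sub_left (hu _) (hv _) (hw _), sub_add_cancel, zero_add] using
    h_diff.add hvw

end L2

section StarContrNorm

variable {b s : ℕ} {G : (Fin (s + 1 + b) → ℝ) → ℂ} {C : ℝ≥0}

lemma L2norm_starContr_le {a : ℕ} {F : (Fin (a + 1 + s) → ℝ) → ℂ}
    (hF : MemLp F 2 (μpos (a + 1 + s)))
    (hG : AEStronglyMeasurable G (μpos (s + 1 + b))) (hC : SliceL2Bound s b G C) :
    L2norm (a + 1 + b) (starContr a b s F G) ≤ C * L2norm (a + 1 + s) F := by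
  rw [L2norm_eq_toReal_eLpNorm (memLp_starContr hF hG hC).1, L2norm_eq_toReal_eLpNorm hF.1,
    ← ENNReal.coe_toReal, ← ENNReal.toReal_mul]
  exact ENNReal.toReal_mono (ENNReal.mul_ne_top ENNReal.coe_ne_top hF.2.ne)
    (eLpNorm_starContr_le hF hG hC)

lemma L2norm_starContr_sub_le {E F : (Fin (s + 1 + s) → ℝ) → ℂ}
    (hE : MemLp E 2 (μpos (s + 1 + s)))
    (hF : MemLp F 2 (μpos (s + 1 + s))) (hG : MemLp G 2 (μpos (s + 1 + b)))
    (hC : SliceL2Bound s b G C) :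
    L2norm (s + 1 + b) (starContr s b s F G - G) ≤
      C * L2norm (s + 1 + s) (F - E) + L2norm (s + 1 + b) (starContr s b s E G - G) := by
  have h_split : starContr s b s F G - G =ᵐ[μpos (s + 1 + b)]
      starContr s b s (F - E) G + (starContr s b s E G - G) := by
    filter_upwards [starContr_sub_ae hF hE hG.1 hC] with t ht
    simp only [Pi.add_apply, Pi.sub_apply, ht]
    ring
  rw [L2norm_congr_ae h_split]
  refine (L2norm_add_le (memLp_starContr (hF.sub hE) hG.1 hC)
    ((memLp_starContr hE hG.1 hC).sub hG)).trans ?_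
  gcongr
  exact L2norm_starContr_le (hF.sub hE) hG.1 hC

end StarContrNorm

section Iteration

variable {r : ℕ} {N ι : Type*} {l : Filter N} {f : N → ι → (Fin (r + 1 + r) → ℝ) → ℂ} {C : ι → ℝ≥0}

lemma memLp_foldl_starContr {F : (Fin (r + 1 + r) → ℝ) → ℂ}
    (hF : MemLp F 2 (μpos (r + 1 + r))) {Gs : List ((Fin (r + 1 + r) → ℝ) → ℂ)}
    (hGs : ∀ G ∈ Gs, MemLp G 2 (μpos (r + 1 + r)) ∧ ∃ C, SliceL2Bound r r G C) :
    MemLp (Gs.foldl (starContr r r r) F) 2 (μpos (r + 1 + r)) := by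
  induction Gs generalizing F with
  | nil => exact hF
  | cons G Gs ih =>
    obtain ⟨⟨hG, C, hC⟩, hGs⟩ := List.forall_mem_cons.1 hGs
    exact ih (memLp_starContr hF hG.1 hC) hGs

lemma tendsto_L2norm_starContr_sub {i j : ι} {F : N → (Fin (r + 1 + r) → ℝ) → ℂ}
    (hF : ∀ n, MemLp (F n) 2 (μpos (r + 1 + r)))
    (hmem : ∀ n i, MemLp (f n i) 2 (μpos (r + 1 + r)))
    (hC : ∀ n i, SliceL2Bound r r (f n i) (C i))
    (hF_sub : Tendsto (fun n => L2norm (r + 1 + r) (F n - f n i)) l (𝓝 0))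
    (hstar : Tendsto (fun n => L2norm (r + 1 + r) (starContr r r r (f n i) (f n j) - f n j))
      l (𝓝 0)) :
    Tendsto (fun n => L2norm (r + 1 + r) (starContr r r r (F n) (f n j) - f n j)) l (𝓝 0) := by
  refine squeeze_zero (fun n => Real.sqrt_nonneg _)
    (fun n => L2norm_starContr_sub_le (hmem n i) (hF n) (hmem n j) (hC n j)) ?_
  simpa only [mul_zero, add_zero] using (hF_sub.const_mul (C j : ℝ)).add hstar

lemma tendsto_L2norm_foldl_starContr_sub (hmem : ∀ n i, MemLp (f n i) 2 (μpos (r + 1 + r)))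
    (hC : ∀ n i, SliceL2Bound r r (f n i) (C i))
    (hstar : ∀ i j, Tendsto (fun n =>
      L2norm (r + 1 + r) (starContr r r r (f n i) (f n j) - f n j)) l (𝓝 0))
    (js : List ι) {i : ι} {F : N → (Fin (r + 1 + r) → ℝ) → ℂ}
    (hF : ∀ n, MemLp (F n) 2 (μpos (r + 1 + r)))
    (hF_sub : Tendsto (fun n => L2norm (r + 1 + r) (F n - f n i)) l (𝓝 0)) :
    Tendsto (fun n => L2norm (r + 1 + r)
      ((js.map (f n)).foldl (starContr r r r) (F n) - f n (js.getLastD i))) l (𝓝 0) := by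
  induction js generalizing i F with
  | nil => exact hF_sub
  | cons j js ih =>
    simp only [List.map_cons, List.foldl_cons, List.getLastD_cons]
    exact ih (fun n => memLp_starContr (hF n) (hmem n j).1 (hC n j))
      (tendsto_L2norm_starContr_sub hF hmem hC hF_sub (hstar i j))

end Iteration

theorem iterated_star_contraction_limit_general {r : ℕ} {N ι : Type*} {l : Filter N}
    {f : N → ι → (Fin (r + 1 + r) → ℝ) → ℂ} {C : ι → ℝ≥0} {Λ : ι → ι → ℂ}
    (hmem : ∀ n i, MemLp (f n i) 2 (μpos (r + 1 + r)))
    (hsym : ∀ n i, IsSymmFn (r + 1 + r) (f n i))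
    (hC : ∀ n i, SliceL2Bound r r (f n i) (C i))
    (hinner : ∀ i j, Tendsto (fun n => L2inner (r + 1 + r) (f n i) (f n j)) l (𝓝 (Λ i j)))
    (hstar : ∀ i j, Tendsto (fun n =>
      L2norm (r + 1 + r) (starContr r r r (f n i) (f n j) - f n j)) l (𝓝 0))
    (js : List ι) (i j : ι) :
    Tendsto (fun n => fullContr (r + 1 + r)
      ((js.map (f n)).foldl (starContr r r r) (f n i)) (f n j)) l (𝓝 (Λ (js.getLastD i) j)) := by
  have h_norm := tendsto_L2norm_foldl_starContr_sub hmem hC hstar js (hmem · i)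
    (i := i) (by simp [L2norm, tendsto_const_nhds])
  have h_memLp n : MemLp ((js.map (f n)).foldl (starContr r r r) (f n i)) 2 (μpos (r + 1 + r)) :=
    memLp_foldl_starContr (hmem n i) <| List.forall_mem_map.2 fun j _ => ⟨hmem n j, C j, hC n j⟩
  simp only [fullContr_eq_L2inner _ (hsym _ _)]
  exact tendsto_L2inner_of_tendsto_L2norm_sub h_memLp (hmem · _) (hmem · j) h_norm
    (hinner _ j) (hinner j j)

/-- for odd `q`, iterated star contractions of index `((q+1)/2,(q-1)/2)`
followed by a full contraction converge to `λ`. -/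
theorem iterated_star_contraction_limit (q : ℕ) (hq3 : 3 ≤ q) (hqo : q % 2 = 1)
    (lam : ℝ) (hlam : 0 < lam)
    (f : ℕ → ℕ → (Fin q → ℝ) → ℂ)
    (hmem : ∀ n i, MeasureTheory.MemLp (f n i) 2 (μpos q))
    (hsym : ∀ n i, IsSymmFn q (f n i))
    (M L : ℕ → ℝ) (S : ℕ → ℕ → Set (Fin q → ℝ))
    (hcube : ∀ n i, IsCube q (S n i)) (hsub : ∀ n i, S n i ⊆ posOrthant q)
    (hbd : ∀ n i, ∀ᵐ t ∂(μpos q), ‖f n i t‖ ≤ M i)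
    (hsupp : ∀ n i, ∀ᵐ t ∂(μpos q), t ∉ S n i → f n i t = 0)
    (hvol : ∀ n i, (MeasureTheory.volume (S n i)).toReal ≤ L i)
    (hinner : ∀ i j, Filter.Tendsto (fun n => L2inner q (f n i) (f n j)) Filter.atTop
      (nhds (lam : ℂ)))
    (hstar : ∀ i j, Filter.Tendsto (fun n => L2norm q (fun t =>
        reindex (show q + q + 1 - 2 * ((q + 1) / 2) = q by omega)
          (starC q q ((q + 1) / 2) (f n i) (f n j)) t - f n j t))
      Filter.atTop (nhds 0))
    (k : ℕ) (hk : 1 ≤ k) (idx : ℕ → ℕ) :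
    Filter.Tendsto (fun n => fullContr q
        (((List.range (k - 1)).map fun a => f n (idx (a + 2))).foldl
          (fun F G => reindex (show q + q + 1 - 2 * ((q + 1) / 2) = q by omega)
            (starC q q ((q + 1) / 2) F G))
          (f n (idx 1)))
        (f n (idx (k + 1))))
      Filter.atTop (nhds (lam : ℂ)) := by
  obtain ⟨r, rfl⟩ : ∃ r, q = r + 1 + r := ⟨q / 2, by omega⟩
  have half_eq : (r + 1 + r + 1) / 2 = r + 1 := by omega
  simp only [reindex_starC_eq_starContr half_eq] at hstar ⊢
  have h_slice n i : SliceL2Bound r r (f n i) (‖M i‖₊ * max 1 (L i).toNNReal) :=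
    sliceL2Bound_of_isCube (hcube n i) (hbd n i) (hsupp n i) (hvol n i)
  simpa only [List.map_map, Function.comp_def] using
    iterated_star_contraction_limit_general hmem hsym h_slice hinner hstar
      ((List.range (k - 1)).map fun a => idx (a + 2)) (idx 1) (idx (k + 1))

end
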